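/- If ζ and ε are independent real random variables with ζ Gaussian N(0,1) and ε having nonzero variance, and the conditional expectation E(ζ | ζ + ε) is almost surely a linear function c·(ζ+ε) of ζ+ε, then ε is Gaussian. -/

import Mathlib

open MeasureTheory ProbabilityTheory

/-!
Let `ζ` have law `N(m, v)` with `v ≠ 0`, let `E[ζ | S] = a + cS` for `S = ζ + ε`, and let `ψ` be the
characteristic function of `S`. Compute `E[ζ exp(itS)]` in two ways: by independence it is
`(m + ivt) ψ(t)`, and by conditioning on `S` it is `E[(a + cS) exp(itS)]`. If `c` were zero, `ψ`
would vanish off the origin, contradicting its continuity and `ψ(0) = 1`. So `S` is integrable, the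
second expression is `a ψ(t) - ic ψ'(t)`, and the resulting linear differential equation forces `ψ`
to be a Gaussian characteristic function. Dividing it by that of `ζ` shows that `ε` is Gaussian.
-/

open Complex Filter
open scoped NNReal Topology

section ExponentialODE

theorem eq_mul_exp_sub_of_hasDerivAt {f p p' : ℝ → ℂ} (hp : ∀ t, HasDerivAt p (p' t) t)
    (hf : ∀ t, HasDerivAt f (p' t * f t) t) (s t : ℝ) :
    f t = f s * exp (p t - p s) := by
  have hconst (u : ℝ) : HasDerivAt (fun u ↦ f u * exp (-p u)) 0 u :=
    ((hf u).mul (hp u).neg.cexp).congr_deriv (by ring)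
  have hst : f t * exp (-p t) = f s * exp (-p s) :=
    is_const_of_deriv_eq_zero (fun u ↦ (hconst u).differentiableAt) (fun u ↦ (hconst u).deriv) t s
  calc f t = f t * exp (-p t) * exp (p t) := by rw [mul_assoc, ← exp_add]; simp
    _ = f s * exp (p t - p s) := by rw [hst, mul_assoc, ← exp_add]; ring_nf

theorem hasDerivAt_ofReal_mul_sub_mul_sq_div_two (α β : ℂ) (t : ℝ) :
    HasDerivAt (fun t : ℝ ↦ t * α - β * t ^ 2 / 2) (α - β * t) t := by
  have hid : HasDerivAt (fun t : ℝ ↦ (t : ℂ)) 1 t := (hasDerivAt_id t).ofReal_comp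
  refine ((hid.mul_const α).sub (((hid.pow 2).const_mul β).div_const 2)).congr_deriv ?_
  push_cast
  ring

end ExponentialODE

section CharFun

theorem hasDerivAt_charFun {ν : Measure ℝ} [IsFiniteMeasure ν] (hν : Integrable id ν) (t : ℝ) :
    HasDerivAt (charFun ν) (I * ∫ x, x * exp (t * x * I) ∂ν) t := by
  have hmem : MemLp id ((1 : ℕ) : ENNReal) ν := by simpa using memLp_one_iff_integrable.2 hν
  have hdiff : DifferentiableAt ℝ (charFun ν) t :=
    (contDiff_charFun hmem).contDiffAt.differentiableAt (by simp)
  refine hdiff.hasDerivAt.congr_deriv ?_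
  simpa using iteratedDeriv_charFun (t := t) hmem

theorem exists_ne_zero_charFun_ne_zero (ν : Measure ℝ) [IsProbabilityMeasure ν] :
    ∃ t ≠ 0, charFun ν t ≠ 0 := by
  have hnear : ∀ᶠ t in 𝓝 (0 : ℝ), charFun ν t ≠ 0 :=
    continuous_charFun.continuousAt.eventually_ne (by simp)
  obtain ⟨t, hψt, ht⟩ := ((hnear.filter_mono nhdsWithin_le_nhds).and
    (self_mem_nhdsWithin (s := {(0 : ℝ)}ᶜ))).exists
  exact ⟨t, ht, hψt⟩

theorem hasDerivAt_charFun_gaussianReal (m : ℝ) (v : ℝ≥0) (t : ℝ) :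
    HasDerivAt (charFun (gaussianReal m v))
      ((m * I - v * t) * charFun (gaussianReal m v) t) t := by
  have hfun : charFun (gaussianReal m v) = fun t : ℝ ↦ exp (t * (m * I) - v * t ^ 2 / 2) := by
    ext t
    rw [charFun_gaussianReal, mul_assoc]
  rw [hfun]
  exact (hasDerivAt_ofReal_mul_sub_mul_sq_div_two _ _ t).cexp.congr_deriv (mul_comm _ _)

theorem integral_mul_exp_gaussianReal (m : ℝ) (v : ℝ≥0) (t : ℝ) :
    ∫ x, x * exp (t * x * I) ∂(gaussianReal m v)
      = (m + v * t * I) * charFun (gaussianReal m v) t := by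
  have hint : Integrable id (gaussianReal m v) := (memLp_id_gaussianReal 1).integrable le_rfl
  have hderiv := (hasDerivAt_charFun hint t).unique (hasDerivAt_charFun_gaussianReal m v t)
  refine mul_left_cancel₀ I_ne_zero (hderiv.trans ?_)
  linear_combination -(v * t * charFun (gaussianReal m v) t) * I_mul_I

theorem eq_gaussianReal_of_charFun_eq {ν : Measure ℝ} [IsProbabilityMeasure ν] {m w : ℝ}
    (h : ∀ t, charFun ν t = exp (t * m * I - w * t ^ 2 / 2)) :
    ν = gaussianReal m w.toNNReal := by
  have hw : 0 ≤ w := by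
    have hnorm : ‖exp (((1 : ℝ) : ℂ) * m * I - w * ((1 : ℝ) : ℂ) ^ 2 / 2)‖ ≤ 1 :=
      h 1 ▸ norm_charFun_le_one 1
    rw [norm_exp, Real.exp_le_one_iff] at hnorm
    have hre : (((1 : ℝ) : ℂ) * m * I - w * ((1 : ℝ) : ℂ) ^ 2 / 2).re = -(w / 2) := by simp
    linarith
  refine Measure.ext_of_charFun (funext fun t ↦ ?_)
  rw [h, charFun_gaussianReal, Real.coe_toNNReal w hw]

theorem eq_gaussianReal_of_hasDerivAt_charFun {ν : Measure ℝ} [IsProbabilityMeasure ν] {m w : ℝ}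
    (h : ∀ t : ℝ, HasDerivAt (charFun ν) ((m * I - w * t) * charFun ν t) t) :
    ν = gaussianReal m w.toNNReal := by
  refine eq_gaussianReal_of_charFun_eq fun t ↦ ?_
  rw [eq_mul_exp_sub_of_hasDerivAt (hasDerivAt_ofReal_mul_sub_mul_sq_div_two (m * I) w) h 0 t]
  simp [mul_assoc]

end CharFun

section RandomVariables

variable {Ω : Type*} {mΩ : MeasurableSpace Ω} {μ : Measure Ω}

theorem integral_condExp_smul {F : Type*} [NormedAddCommGroup F] [NormedSpace ℝ F]
    [CompleteSpace F] {m : MeasurableSpace Ω} (hm : m ≤ mΩ) [SigmaFinite (μ.trim hm)]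
    {X : Ω → ℝ} {g : Ω → F} (hg : AEStronglyMeasurable[m] g μ) (hX : Integrable X μ)
    (hXg : Integrable (X • g) μ) :
    ∫ ω, μ[X | m] ω • g ω ∂μ = ∫ ω, X ω • g ω ∂μ :=
  (integral_congr_ae (condExp_smul_of_aestronglyMeasurable_right hX hXg hg)).symm.trans
    (integral_condExp hm)

theorem integrable_mul_exp {X S : Ω → ℝ} (hX : Integrable X μ)
    (hS : AEMeasurable S μ) (t : ℝ) :
    Integrable (fun ω ↦ (X ω : ℂ) * exp (t * S ω * I)) μ := by
  refine hX.ofReal.mul_bdd (c := 1) (by fun_prop) (ae_of_all _ fun ω ↦ ?_)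
  exact_mod_cast (norm_exp_ofReal_mul_I (t * S ω)).le

theorem charFun_map_eq_integral {X : Ω → ℝ} (hX : AEMeasurable X μ) (t : ℝ) :
    charFun (μ.map X) t = ∫ ω, exp (t * X ω * I) ∂μ := by
  rw [charFun_apply_real, integral_map hX (by fun_prop)]

theorem hasDerivAt_charFun_map [IsFiniteMeasure μ] {X : Ω → ℝ} (hX : Integrable X μ) (t : ℝ) :
    HasDerivAt (charFun (μ.map X)) (I * ∫ ω, X ω * exp (t * X ω * I) ∂μ) t := by
  have hmap : Integrable id (μ.map X) :=
    (integrable_map_measure aestronglyMeasurable_id hX.aemeasurable).2 hX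
  have hderiv := hasDerivAt_charFun hmap t
  rwa [integral_map hX.aemeasurable (by fun_prop)] at hderiv

theorem integral_affine_mul_exp [IsFiniteMeasure μ] {S : Ω → ℝ} (hS : Integrable S μ)
    (a c t : ℝ) :
    ∫ ω, (a + c * S ω : ℝ) * exp (t * S ω * I) ∂μ
      = a * charFun (μ.map S) t + c * ∫ ω, S ω * exp (t * S ω * I) ∂μ := by
  rw [charFun_map_eq_integral hS.aemeasurable, ← integral_const_mul, ← integral_const_mul,
    ← integral_add (integrable_mul_exp (integrable_const a) hS.aemeasurable t)
      ((integrable_mul_exp hS hS.aemeasurable t).const_mul _)]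
  congr with ω
  push_cast
  ring

theorem integral_mul_exp_add_of_indepFun {X Y : Ω → ℝ} (hXY : IndepFun X Y μ)
    (hX : AEMeasurable X μ) (hY : AEMeasurable Y μ) (t : ℝ) :
    ∫ ω, X ω * exp (t * (X ω + Y ω : ℝ) * I) ∂μ
      = (∫ x, x * exp (t * x * I) ∂(μ.map X)) * charFun (μ.map Y) t := by
  rw [charFun_map_eq_integral hY, integral_map hX (by fun_prop),
    ← hXY.integral_fun_comp_mul_comp (f := fun x : ℝ ↦ (x : ℂ) * exp (t * x * I))
      (g := fun y : ℝ ↦ exp (t * y * I)) hX hY (by fun_prop) (by fun_prop)]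
  refine integral_congr_ae (ae_of_all _ fun ω ↦ ?_)
  simp only [mul_assoc, ← exp_add]
  push_cast
  ring_nf

theorem integral_mul_exp_add_of_map_eq_gaussianReal [IsFiniteMeasure μ] {X Y : Ω → ℝ}
    (hXY : IndepFun X Y μ) (hX : AEMeasurable X μ) (hY : AEMeasurable Y μ) {m : ℝ} {v : ℝ≥0}
    (hlaw : μ.map X = gaussianReal m v) (t : ℝ) :
    ∫ ω, X ω * exp (t * (X ω + Y ω : ℝ) * I) ∂μ
      = (m + v * t * I) * charFun (μ.map fun ω ↦ X ω + Y ω) t := by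
  rw [integral_mul_exp_add_of_indepFun hXY hX hY, hXY.charFun_map_fun_add_eq_mul hX hY, hlaw,
    integral_mul_exp_gaussianReal, Pi.mul_apply, mul_assoc]

theorem integral_mul_exp_of_condExp_comap_ae_eq [IsFiniteMeasure μ] {X S : Ω → ℝ} {r : ℝ → ℝ}
    (hX : Integrable X μ) (hS : Measurable S)
    (hr : μ[X | MeasurableSpace.comap S inferInstance] =ᵐ[μ] fun ω ↦ r (S ω)) (t : ℝ) :
    ∫ ω, X ω * exp (t * S ω * I) ∂μ = ∫ ω, r (S ω) * exp (t * S ω * I) ∂μ := by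
  have hexp : Measurable[MeasurableSpace.comap S inferInstance] fun ω ↦ exp (t * S ω * I) :=
    Measurable.comp (g := fun x : ℝ ↦ exp (t * x * I)) (by fun_prop) (comap_measurable S)
  calc ∫ ω, X ω * exp (t * S ω * I) ∂μ
      = ∫ ω, μ[X | MeasurableSpace.comap S inferInstance] ω • exp (t * S ω * I) ∂μ :=
        (integral_condExp_smul hS.comap_le hexp.aestronglyMeasurable hX
          (integrable_mul_exp hX hS.aemeasurable t)).symm
    _ = ∫ ω, r (S ω) * exp (t * S ω * I) ∂μ := by
        refine integral_congr_ae ?_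
        filter_upwards [hr] with ω hω
        rw [hω, real_smul]

variable [IsProbabilityMeasure μ] {ζ ε : Ω → ℝ} {m a c : ℝ} {v : ℝ≥0}

theorem integral_affine_mul_exp_of_condExp_ae_eq (hmζ : Measurable ζ) (hmε : Measurable ε)
    (hindep : IndepFun ζ ε μ) (hζ : μ.map ζ = gaussianReal m v)
    (hlin : μ[ζ | MeasurableSpace.comap (fun ω ↦ ζ ω + ε ω) inferInstance]
      =ᵐ[μ] fun ω ↦ a + c * (ζ ω + ε ω)) (t : ℝ) :
    ∫ ω, (a + c * (ζ ω + ε ω) : ℝ) * exp (t * (ζ ω + ε ω : ℝ) * I) ∂μ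
      = (m + v * t * I) * charFun (μ.map fun ω ↦ ζ ω + ε ω) t := by
  have hζint : Integrable ζ μ := HasGaussianLaw.integrable ⟨hζ ▸ inferInstance⟩
  rw [← integral_mul_exp_add_of_map_eq_gaussianReal hindep hmζ.aemeasurable hmε.aemeasurable hζ]
  exact (integral_mul_exp_of_condExp_comap_ae_eq (r := fun x ↦ a + c * x) hζint
    (hmζ.add hmε) hlin t).symm

theorem slope_ne_zero_of_condExp_ae_eq (hmζ : Measurable ζ) (hmε : Measurable ε)
    (hindep : IndepFun ζ ε μ) (hv : v ≠ 0) (hζ : μ.map ζ = gaussianReal m v)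
    (hlin : μ[ζ | MeasurableSpace.comap (fun ω ↦ ζ ω + ε ω) inferInstance]
      =ᵐ[μ] fun ω ↦ a + c * (ζ ω + ε ω)) : c ≠ 0 := by
  rintro rfl
  have hmS : Measurable fun ω ↦ ζ ω + ε ω := hmζ.add hmε
  have := Measure.isProbabilityMeasure_map (μ := μ) hmS.aemeasurable
  obtain ⟨t, ht, hψt⟩ := exists_ne_zero_charFun_ne_zero (μ.map fun ω ↦ ζ ω + ε ω)
  have hψ := integral_affine_mul_exp_of_condExp_ae_eq hmζ hmε hindep hζ hlin t
  simp only [zero_mul, add_zero, integral_const_mul, ← charFun_map_eq_integral hmS.aemeasurable]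
    at hψ
  have him : v * t = 0 := by simpa using (congrArg im (mul_right_cancel₀ hψt hψ)).symm
  exact mul_ne_zero (NNReal.coe_ne_zero.2 hv) ht him

theorem hasDerivAt_charFun_map_add_of_condExp_ae_eq (hmζ : Measurable ζ) (hmε : Measurable ε)
    (hindep : IndepFun ζ ε μ) (hζ : μ.map ζ = gaussianReal m v) (hc : c ≠ 0)
    (hlin : μ[ζ | MeasurableSpace.comap (fun ω ↦ ζ ω + ε ω) inferInstance]
      =ᵐ[μ] fun ω ↦ a + c * (ζ ω + ε ω)) (t : ℝ) :
    HasDerivAt (charFun (μ.map fun ω ↦ ζ ω + ε ω))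
      ((((m - a) / c : ℝ) * I - (v / c : ℝ) * t) * charFun (μ.map fun ω ↦ ζ ω + ε ω) t) t := by
  set S : Ω → ℝ := fun ω ↦ ζ ω + ε ω
  have hS : Integrable S μ := by
    have haff : Integrable (fun ω ↦ a + c * S ω) μ := integrable_condExp.congr hlin
    rwa [integrable_const_add_iff, integrable_const_mul_iff hc.isUnit] at haff
  have hode : a * charFun (μ.map S) t + c * ∫ ω, S ω * exp (t * S ω * I) ∂μ
      = (m + v * t * I) * charFun (μ.map S) t :=
    (integral_affine_mul_exp hS a c t).symm.trans
      (integral_affine_mul_exp_of_condExp_ae_eq hmζ hmε hindep hζ hlin t)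
  have hmoment : ∫ ω, S ω * exp (t * S ω * I) ∂μ
      = (m - a + v * t * I) * charFun (μ.map S) t / c := by
    rw [eq_div_iff (ofReal_ne_zero.2 hc)]
    linear_combination hode
  refine (hasDerivAt_charFun_map hS t).congr_deriv ?_
  rw [hmoment]
  push_cast
  linear_combination v * t * charFun (μ.map S) t / c * I_mul_I

theorem stmt1_general (hmζ : Measurable ζ) (hmε : Measurable ε) (hindep : IndepFun ζ ε μ)
    (hv : v ≠ 0) (hζ : μ.map ζ = gaussianReal m v)
    (hlin : μ[ζ | MeasurableSpace.comap (fun ω ↦ ζ ω + ε ω) inferInstance]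
      =ᵐ[μ] fun ω ↦ a + c * (ζ ω + ε ω)) :
    HasGaussianLaw ε μ := by
  have hmS : Measurable fun ω ↦ ζ ω + ε ω := hmζ.add hmε
  have := Measure.isProbabilityMeasure_map (μ := μ) hmS.aemeasurable
  have hc : c ≠ 0 := slope_ne_zero_of_condExp_ae_eq hmζ hmε hindep hv hζ hlin
  have hSlaw := eq_gaussianReal_of_hasDerivAt_charFun
    (hasDerivAt_charFun_map_add_of_condExp_ae_eq hmζ hmε hindep hζ hc hlin)
  have hζgauss : HasGaussianLaw ζ μ := ⟨hζ ▸ inferInstance⟩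
  have hSgauss : HasGaussianLaw (ζ + ε) μ := ⟨hSlaw ▸ inferInstance⟩
  have hsub : ζ + ε - ζ = ε := add_sub_cancel_left ζ ε
  exact hsub ▸ IndepFun.hasGaussianLaw_sub_of_sub hζgauss hSgauss (hsub.symm ▸ hindep)

end RandomVariables

/-- If ζ and ε are independent, ζ ~ N(0,1), Var ε ≠ 0, and
E(ζ | ζ+ε) = c(ζ+ε) a.s. for some constant c, then ε is Gaussian. -/
theorem stmt1 {Ω : Type*} [MeasurableSpace Ω] (μ : Measure Ω) [IsProbabilityMeasure μ]
    (ζ ε : Ω → ℝ) (hmζ : Measurable ζ) (hmε : Measurable ε)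
    (hindep : IndepFun ζ ε μ)
    (hζ : Measure.map ζ μ = gaussianReal 0 1)
    (hεvar : variance ε μ ≠ 0)
    (c : ℝ)
    (hlin : μ[ζ | MeasurableSpace.comap (fun ω => ζ ω + ε ω) inferInstance]
      =ᵐ[μ] fun ω => c * (ζ ω + ε ω)) :
    ∃ (m : ℝ) (v : NNReal), Measure.map ε μ = gaussianReal m v :=
  ⟨_, _, (stmt1_general (a := 0) hmζ hmε hindep one_ne_zero hζ
    (by simpa using hlin)).map_eq_gaussianReal⟩
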